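/- Let 1 < p < 2 and define γ(t) = exp(p t^{p−1}) · ∫_t^∞ exp(−p s^{p−1}) ds for t ≥ 0. Then γ is concave on [0,∞), γ is nondecreasing on [0,∞), and γ′(t) → 0 as t → ∞. -/

import Mathlib

/-!
Write `a = p - 1 ∈ (0, 1)` and `r = 1 / a - 1 > 0`. The substitution `s = (t ^ a + w) ^ (1 / a)`
turns `γ` into

  `γ(t) = (1 / a) ∫_0^∞ exp (-p w) (t ^ a + w) ^ r dw`   (`gam_eq`).

For each fixed `w > 0` the function `t ↦ (t ^ a + w) ^ r` is increasing, and it is concave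
(`concaveOn_rpow_add_rpow`): its derivative is `(1 - a) (1 + w t ^ (-a)) ^ r / (t ^ a + w)`, a product
of nonnegative decreasing functions. Integrating against `exp (-p w) dw` gives monotonicity and
concavity of `γ`.

For the derivative, `γ' = p a t ^ (a - 1) γ - 1` (`hasDerivAt_gam`), and the representation above gives
`a t ^ (a - 1) γ(t) = ∫_0^∞ exp (-p w) (1 + w t ^ (-a)) ^ r dw`, which tends to `1 / p` as `t → ∞`
by dominated convergence.
-/

open Real MeasureTheory Set Filter

/-- The function `γ(t) = exp(p t^{p−1}) ∫_t^∞ exp(−p s^{p−1}) ds`. -/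
noncomputable def gam (p : ℝ) (t : ℝ) : ℝ :=
  Real.exp (p * t ^ (p - 1)) * ∫ s in Ioi t, Real.exp (-p * s ^ (p - 1))

lemma integrableOn_exp_neg_mul_add_rpow {p r c : ℝ} (hp : 0 < p) (hr : 0 < r) (hc : 0 ≤ c) :
    IntegrableOn (fun w : ℝ => exp (-p * w) * (c + w) ^ r) (Ioi 0) := by
  have h := (integrableOn_rpow_mul_exp_neg_mul_rpow (s := r) (by linarith) one_pos hp).mono_set
    (Ioi_subset_Ioi hc)
  have himg : (fun w : ℝ => c + w) '' Ioi 0 = Ioi c := by simp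
  rw [← himg, integrableOn_image_iff_integrableOn_abs_deriv_smul (f := fun w : ℝ => c + w)
    (f' := fun _ => 1) measurableSet_Ioi
    (fun x _ => ((hasDerivAt_id x).const_add c).hasDerivWithinAt)
    (fun x _ y _ h => by simpa using h)] at h
  have h2 := h.const_mul (exp (p * c))
  refine h2.congr (Eventually.of_forall fun w => ?_)
  have : exp (-p * w) = exp (p * c) * exp (-p * (c + w)) := by
    rw [← exp_add]; ring_nf
  simp only [abs_one, one_smul, rpow_one, this]
  ring

/-- The change of variables `s = (t ^ a + w) ^ (1 / a)`. -/
lemma gam_eq {p r : ℝ} (hp1 : 1 < p) (hr : r = 1 / (p - 1) - 1) {t : ℝ} (ht : 0 ≤ t) :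
    gam p t = (1 / (p - 1)) * ∫ w in Ioi (0 : ℝ), exp (-p * w) * (t ^ (p - 1) + w) ^ r := by
  have ha : 0 < p - 1 := by linarith
  set a := p - 1 with ha_def
  have hta : 0 ≤ t ^ a := rpow_nonneg ht a
  have hb : 0 < 1 / a := by positivity
  have himg : (fun w : ℝ => (t ^ a + w) ^ (1 / a)) '' Ioi 0 = Ioi t := by
    ext s
    simp only [mem_image, mem_Ioi]
    constructor
    · rintro ⟨w, hw, rfl⟩
      calc t = (t ^ a) ^ (1 / a) := by rw [← rpow_mul ht, mul_one_div_cancel ha.ne', rpow_one]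
        _ < _ := rpow_lt_rpow hta (by linarith) hb
    · intro hs
      refine ⟨s ^ a - t ^ a, sub_pos.2 (rpow_lt_rpow ht hs ha), ?_⟩
      rw [add_sub_cancel, ← rpow_mul (ht.trans hs.le), mul_one_div_cancel ha.ne', rpow_one]
  have hinj : InjOn (fun w : ℝ => (t ^ a + w) ^ (1 / a)) (Ioi 0) := by
    refine StrictMonoOn.injOn fun x hx y _ hxy => ?_
    have hx' : (0 : ℝ) < x := hx
    exact rpow_lt_rpow (by linarith) (by linarith) hb
  have hder : ∀ w ∈ Ioi (0 : ℝ), HasDerivWithinAt (fun w : ℝ => (t ^ a + w) ^ (1 / a))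
      (1 / a * (t ^ a + w) ^ r) (Ioi 0) w := by
    intro w hw
    have hw' : (0 : ℝ) < w := hw
    have h := ((hasDerivAt_id w).const_add (t ^ a)).rpow_const (p := 1 / a)
      (Or.inl (by simp only [id]; positivity))
    refine (h.congr_deriv ?_).hasDerivWithinAt
    simp [hr]
  rw [gam, ← ha_def, ← himg, integral_image_eq_integral_abs_deriv_smul measurableSet_Ioi hder hinj,
    ← integral_const_mul, ← integral_const_mul]
  refine setIntegral_congr_fun measurableSet_Ioi fun w hw => ?_
  have hw' : (0 : ℝ) < w := hw
  have h1 : ((t ^ a + w) ^ (1 / a)) ^ a = t ^ a + w := by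
    rw [← rpow_mul (by positivity), one_div_mul_cancel ha.ne', rpow_one]
  have h2 : exp (-p * w) = exp (p * t ^ a) * exp (-p * (t ^ a + w)) := by
    rw [← exp_add]; ring_nf
  simp only [h1, h2, smul_eq_mul]
  rw [abs_of_nonneg (by positivity)]
  ring

lemma concaveOn_rpow_add_rpow {a r w : ℝ} (ha : 0 < a) (ha1 : a < 1) (hr : r = 1 / a - 1)
    (hw : 0 < w) : ConcaveOn ℝ (Ici 0) (fun t : ℝ => (t ^ a + w) ^ r) := by
  have hr0 : 0 < r := by rw [hr, sub_pos]; exact one_lt_one_div ha ha1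
  have har : a * r = 1 - a := by rw [hr]; field_simp
  have hder : ∀ t : ℝ, 0 < t → HasDerivAt (fun t : ℝ => (t ^ a + w) ^ r)
      ((1 - a) * ((1 + w * t ^ (-a)) ^ r * (t ^ a + w)⁻¹)) t := by
    intro t ht
    have h := ((hasDerivAt_rpow_const (p := a) (Or.inl ht.ne')).add_const w).rpow_const (p := r)
      (Or.inl (by positivity))
    refine h.congr_deriv ?_
    have e1 : 1 + w * t ^ (-a) = (t ^ a + w) * t ^ (-a) := by
      rw [add_mul, ← rpow_add ht]; simp
    rw [e1, mul_rpow (by positivity) (by positivity), ← rpow_mul ht.le,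
      rpow_sub_one (x := t ^ a + w) (by positivity), show -a * r = a - 1 by linarith, ← har]
    ring
  refine AntitoneOn.concaveOn_of_deriv (convex_Ici 0) ?_ ?_ ?_
  · refine ContinuousOn.rpow_const ?_ fun _ _ => Or.inr hr0.le
    exact ((continuous_rpow_const ha.le).add continuous_const).continuousOn
  · rw [interior_Ici]
    exact fun t ht => (hder t ht).differentiableAt.differentiableWithinAt
  · rw [interior_Ici]
    intro x hx y hy hxy
    have hx' : (0 : ℝ) < x := hx
    have hy' : (0 : ℝ) < y := hy
    rw [(hder x hx).deriv, (hder y hy).deriv]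
    have h1 : y ^ (-a) ≤ x ^ (-a) := rpow_le_rpow_of_nonpos hx' hxy (by linarith)
    have h2 : x ^ a ≤ y ^ a := rpow_le_rpow hx'.le hxy ha.le
    have h3 : 0 ≤ 1 - a := by linarith
    gcongr

lemma hasDerivAt_gam {p : ℝ} (hp1 : 1 < p) {t : ℝ} (ht : 0 < t) :
    HasDerivAt (gam p) (p * ((p - 1) * t ^ (p - 1 - 1) * gam p t) - 1) t := by
  have ha : 0 < p - 1 := by linarith
  have hcont : Continuous fun s : ℝ => exp (-p * s ^ (p - 1)) :=
    continuous_exp.comp (continuous_const.mul (continuous_rpow_const ha.le))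
  have hint : IntegrableOn (fun s : ℝ => exp (-p * s ^ (p - 1))) (Ioi 0) := by
    simpa using integrableOn_rpow_mul_exp_neg_mul_rpow (s := 0) (by norm_num) ha
      (show 0 < p by linarith)
  have hF : HasDerivAt (fun u : ℝ => ∫ s in Ioi u, exp (-p * s ^ (p - 1)))
      (-exp (-p * t ^ (p - 1))) t := by
    have h := (hcont.integral_hasStrictDerivAt 0 t).hasDerivAt.const_sub
      (∫ s in Ioi (0 : ℝ), exp (-p * s ^ (p - 1)))
    refine h.congr_of_eventuallyEq ?_
    filter_upwards [lt_mem_nhds ht] with u hu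
    rw [← intervalIntegral.integral_Ioi_sub_Ioi hint hu.le, sub_sub_cancel]
  have hE := (((hasDerivAt_rpow_const (p := p - 1) (Or.inl ht.ne')).const_mul p).exp).mul hF
  refine hE.congr_deriv ?_
  have h1 : exp (p * t ^ (p - 1)) * exp (-p * t ^ (p - 1)) = 1 := by
    rw [← exp_add]; simp
  rw [gam]
  linear_combination -h1

lemma tendsto_integral_one_add_mul_rpow {p a r : ℝ} (hp : 0 < p) (ha : 0 < a) (hr : 0 < r) :
    Tendsto (fun t : ℝ => ∫ w in Ioi (0 : ℝ), exp (-p * w) * (1 + w * t ^ (-a)) ^ r) atTop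
      (nhds (1 / p)) := by
  have hlim : ∫ w in Ioi (0 : ℝ), exp (-p * w) = 1 / p := by
    rw [integral_exp_mul_Ioi (by linarith)]; simp
  rw [← hlim]
  refine tendsto_integral_filter_of_dominated_convergence
    (fun w => exp (-p * w) * (1 + w) ^ r) ?_ ?_
    (integrableOn_exp_neg_mul_add_rpow hp hr zero_le_one) ?_
  · refine Eventually.of_forall fun t => Measurable.aestronglyMeasurable ?_
    fun_prop
  · filter_upwards [eventually_ge_atTop 1] with t ht
    filter_upwards [ae_restrict_mem measurableSet_Ioi] with w hw
    have hw' : (0 : ℝ) < w := hw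
    have ht0 : 0 < t := by linarith
    rw [norm_of_nonneg (by positivity)]
    have h1 : t ^ (-a) ≤ 1 := rpow_le_one_of_one_le_of_nonpos ht (by linarith)
    have h2 : w * t ^ (-a) ≤ w := mul_le_of_le_one_right hw'.le h1
    gcongr
  · refine Eventually.of_forall fun w => ?_
    have h0 := ((tendsto_rpow_neg_atTop ha).const_mul w).const_add 1
    have h1 := (h0.rpow_const (p := r) (Or.inr hr.le)).const_mul (exp (-p * w))
    simpa using h1

/-- For `1 < p < 2`, `γ` is concave and nondecreasing on `[0,∞)`, and `γ′(t) → 0`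
as `t → ∞`. -/
theorem stmt_7 (p : ℝ) (hp1 : 1 < p) (hp2 : p < 2) :
    ConcaveOn ℝ (Ici 0) (gam p) ∧ MonotoneOn (gam p) (Ici 0) ∧
      Tendsto (deriv (gam p)) atTop (nhds 0) := by
  have hp : 0 < p := by linarith
  have ha : 0 < p - 1 := by linarith
  have ha1 : p - 1 < 1 := by linarith
  obtain ⟨r, hr⟩ : ∃ r, r = 1 / (p - 1) - 1 := ⟨_, rfl⟩
  have hr0 : 0 < r := by rw [hr, sub_pos]; exact one_lt_one_div ha ha1
  have hI : ∀ t : ℝ, 0 ≤ t →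
      IntegrableOn (fun w : ℝ => exp (-p * w) * (t ^ (p - 1) + w) ^ r) (Ioi 0) :=
    fun t ht => integrableOn_exp_neg_mul_add_rpow hp hr0 (rpow_nonneg ht _)
  refine ⟨⟨convex_Ici 0, ?_⟩, ?_, ?_⟩
  · intro x hx y hy α β hα hβ hαβ
    have hxy : 0 ≤ α • x + β • y := (convex_Ici (0 : ℝ)) hx hy hα hβ hαβ
    rw [gam_eq hp1 hr hx, gam_eq hp1 hr hy, gam_eq hp1 hr hxy]
    simp only [smul_eq_mul] at hxy ⊢
    rw [mul_left_comm α, mul_left_comm β, ← mul_add, ← integral_const_mul, ← integral_const_mul,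
      ← integral_add ((hI x hx).const_mul α) ((hI y hy).const_mul β)]
    refine mul_le_mul_of_nonneg_left ?_ (by positivity)
    refine setIntegral_mono_on (((hI x hx).const_mul α).add ((hI y hy).const_mul β)) (hI _ hxy)
      measurableSet_Ioi fun w hw => ?_
    have h := (concaveOn_rpow_add_rpow ha ha1 hr hw).2 hx hy hα hβ hαβ
    simp only [smul_eq_mul] at h
    calc _ = exp (-p * w) * (α * (x ^ (p - 1) + w) ^ r + β * (y ^ (p - 1) + w) ^ r) := by
          ring
      _ ≤ _ := mul_le_mul_of_nonneg_left h (exp_pos _).le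
  · intro x hx y hy hxy
    have hx' : (0 : ℝ) ≤ x := hx
    rw [gam_eq hp1 hr hx, gam_eq hp1 hr hy]
    refine mul_le_mul_of_nonneg_left ?_ (by positivity)
    refine setIntegral_mono_on (hI x hx) (hI y hy) measurableSet_Ioi fun w hw => ?_
    have hw' : (0 : ℝ) < w := hw
    gcongr
  · have h := ((tendsto_integral_one_add_mul_rpow hp ha hr0).const_mul p).sub_const 1
    rw [mul_one_div_cancel hp.ne', sub_self] at h
    refine h.congr' ?_
    filter_upwards [eventually_gt_atTop 0] with t ht
    rw [(hasDerivAt_gam hp1 ht).deriv, gam_eq hp1 hr ht.le]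
    congr 2
    rw [mul_mul_mul_comm, mul_one_div_cancel ha.ne', one_mul, ← integral_const_mul]
    refine setIntegral_congr_fun measurableSet_Ioi fun w hw => ?_
    have hw' : (0 : ℝ) < w := hw
    have e1 : 1 + w * t ^ (-(p - 1)) = (t ^ (p - 1) + w) * t ^ (-(p - 1)) := by
      rw [add_mul, ← rpow_add ht]; simp
    have e2 : -(p - 1) * r = p - 1 - 1 := by rw [hr]; field_simp; ring
    rw [e1, mul_rpow (by positivity) (by positivity), ← rpow_mul ht.le, e2]
    ring
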